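/- For every β > 0 there exists a constant A > 0 such that every classical solution u of equation (γ) satisfies u(x) ≤ log(A / δ(x)²) for all x ∈ Ω. -/

import Mathlib

/-!
The weight `γ(s)` is nonnegative for `s < 1`, vanishes at `s = 1` (where the inverse of
`log 1 = 0` is taken to be `0`), and is negative for `s > 1`, tending to `-∞` as `s ↓ 1`. The bound
is obtained separately on the two sides of the level set `{δ = 1}`.

* On `{δ = 1}` every solution vanishes (`eq_zero_of_bdist_eq_one`): `Δu - e^u` is continuous and
  equals `γ(δ) u / δ²`, while `γ` jumps from `β` to `0` at `1` from the left.
* On `{δ < 1}`, wherever `u > 0` one has `Δu ≥ e^u`, and the classical Keller–Osserman comparison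
  with the explicit profile `log (C r² / (r² - |z - x|²)²)` on a ball of radius `r = δ(x)/2` applies;
  the part of the ball where `δ > 1` is discarded, as `u = 0` on `{δ = 1}` (`bound_outer`).
* On `{δ > 1}` put `s = δ²` and `t = √(log s)`. The equation reads `Δu = e^u - β u / (s t²)`, and
  the right side is bounded below by `-C / (s t³)`. The barrier `h(s) = K (1 - e^{-a t})` is
  increasing, bounded by `K` and satisfies `4 s h'' + 2 N h' < -C / (s t³)`. Although `δ` need not
  be smooth, `δ ≤ |· - y|` with equality at `x₀` if `y` is a point of the complement nearest to
  `x₀`; hence at a maximum `x₀` of `u - h(δ²)` the function `u` is touched from above by a smooth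
  radial function, and `Δu(x₀) ≤ 4 s h'' + 2 N h'`, a contradiction. So the maximum is attained on
  `{δ = 1}`, and `u ≤ K` (`bound_inner`).

Both comparisons rest on `lap_le_radial`.
-/

open MeasureTheory Real Filter Topology Set

noncomputable section

abbrev Euc (N : ℕ) := EuclideanSpace ℝ (Fin N)

/-- Distance of `x` to the boundary of `Ω` (distance to the complement). -/
def bdist {N : ℕ} (Ω : Set (Euc N)) (x : Euc N) : ℝ := Metric.infDist x Ωᶜ

/-- The strip `Ω_ρ = {x ∈ Ω : δ(x) < ρ}`. -/
def bstrip {N : ℕ} (Ω : Set (Euc N)) (ρ : ℝ) : Set (Euc N) := {x ∈ Ω | bdist Ω x < ρ}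

/-- `C³`-regularity of the boundary, expressed through the regularity of the
distance function in a strip near the boundary. -/
def BoundaryC3 {N : ℕ} (Ω : Set (Euc N)) : Prop :=
  ∃ ρ > 0, ContDiffOn ℝ 3 (bdist Ω) (bstrip Ω ρ)

/-- The Laplacian of `u`. -/
def lap {N : ℕ} (u : Euc N → ℝ) (x : Euc N) : ℝ :=
  ∑ i : Fin N, fderiv ℝ (fun y => fderiv ℝ u y (EuclideanSpace.single i 1)) x
    (EuclideanSpace.single i 1)

/-- A classical solution of `−Δu − (μ/δ²)u + e^u = 0` in `Ω`. -/
def IsSolution {N : ℕ} (μ : ℝ) (Ω : Set (Euc N)) (u : Euc N → ℝ) : Prop :=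
  ContDiffOn ℝ 2 u Ω ∧
  ∀ x ∈ Ω, -lap u x - (μ / (bdist Ω x) ^ 2) * u x + Real.exp (u x) = 0

/-- A large solution: `u(x) → ∞` as `δ(x) → 0`. -/
def IsLarge {N : ℕ} (Ω : Set (Euc N)) (u : Euc N → ℝ) : Prop :=
  ∀ M : ℝ, ∃ ε > 0, ∀ x ∈ Ω, bdist Ω x < ε → M ≤ u x

/-- The borderline potential weight `γ(s) = β·min{ (log(1/s²))⁻¹, 1 }`. -/
def gammaFun (β s : ℝ) : ℝ := β * min (Real.log (s ^ 2)⁻¹)⁻¹ 1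

/-- A classical solution of equation (γ): `−Δu + (γ(δ)/δ²)u + e^u = 0` in `Ω`. -/
def IsGammaSolution {N : ℕ} (β : ℝ) (Ω : Set (Euc N)) (u : Euc N → ℝ) : Prop :=
  ContDiffOn ℝ 2 u Ω ∧
  ∀ x ∈ Ω, -lap u x + (gammaFun β (bdist Ω x) / (bdist Ω x) ^ 2) * u x
      + Real.exp (u x) = 0

/-! ### Maximum principle for radial test functions -/

/-- Second-order necessary condition at an interior maximum, in one variable. -/
lemma second_deriv_nonpos {f f' : ℝ → ℝ} {c : ℝ} (hf : ∀ᶠ t in 𝓝 0, HasDerivAt f (f' t) t)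
    (hc : HasDerivAt f' c 0) (hm : IsLocalMax f 0) : c ≤ 0 := by
  by_contra! hpos
  have e1 : deriv f =ᶠ[𝓝 0] f' := hf.mono fun t ht => ht.deriv
  have e2 : deriv (deriv f) 0 = c := by rw [e1.deriv_eq, hc.deriv]
  have hmin : IsLocalMin f 0 :=
    isLocalMin_of_deriv_deriv_pos (by rw [e2]; exact hpos) hm.deriv_eq_zero
      hf.self_of_nhds.continuousAt
  -- A point that is both a local maximum and a local minimum has a constant neighbourhood.
  have e3 : f =ᶠ[𝓝 0] fun _ => f 0 := by
    filter_upwards [hm, hmin] with t h1 h2 using le_antisymm h1 h2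
  have e4 : deriv (deriv f) 0 = 0 := by
    rw [e3.deriv.deriv_eq]; simp
  linarith

/-- If `u` is touched from above at `x₀` by a radial function `x ↦ H (‖x - y‖²)` plus a constant,
then `Δu(x₀)` is at most the Laplacian `4 q H''(q) + 2 N H'(q)`, `q = ‖x₀ - y‖²`, of that radial
function. -/
lemma lap_le_radial {N : ℕ} {Ω : Set (Euc N)} (hΩo : IsOpen Ω) {u : Euc N → ℝ}
    (hu : ContDiffOn ℝ 2 u Ω) {x₀ y : Euc N} (hx₀ : x₀ ∈ Ω) {H H' : ℝ → ℝ} {H2 q : ℝ}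
    (hq : q = ‖x₀ - y‖ ^ 2)
    (hH : ∀ᶠ s in 𝓝 q, HasDerivAt H (H' s) s) (hH2 : HasDerivAt H' H2 q)
    (hmax : ∀ᶠ x in 𝓝 x₀, u x - H (‖x - y‖ ^ 2) ≤ u x₀ - H (‖x₀ - y‖ ^ 2)) :
    lap u x₀ ≤ 4 * q * H2 + 2 * N * H' q := by
  have hdir : ∀ i : Fin N,
      fderiv ℝ (fun z => fderiv ℝ u z (EuclideanSpace.single i 1)) x₀
        (EuclideanSpace.single i 1) ≤ 4 * (x₀ i - y i) ^ 2 * H2 + 2 * H' q := by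
    intro i
    set e : Euc N := EuclideanSpace.single i 1 with he
    have hd1 : ∀ x ∈ Ω, DifferentiableAt ℝ u x := fun x hx =>
      (hu.contDiffAt (hΩo.mem_nhds hx)).differentiableAt (by norm_num)
    have hd2 : DifferentiableAt ℝ (fun z => fderiv ℝ u z e) x₀ := by
      have h := ((hu.contDiffAt (hΩo.mem_nhds hx₀)).fderiv_right (m := 1) (by norm_num))
      exact (h.differentiableAt (by norm_num)).clm_apply (differentiableAt_const e)
    have hline : ∀ t : ℝ, HasDerivAt (fun t : ℝ => x₀ + t • e) e t := by
      intro t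
      simpa using ((hasDerivAt_id t).smul_const e).const_add x₀
    have hl0 : x₀ + (0 : ℝ) • e = x₀ := by simp
    have hcont : Tendsto (fun t : ℝ => x₀ + t • e) (𝓝 0) (𝓝 x₀) := by
      have := (hline 0).continuousAt.tendsto
      simpa only [hl0] using this
    -- `‖x₀ + t e - y‖²` is a quadratic polynomial in `t`.
    set Q : ℝ → ℝ := fun t => q + 2 * (x₀ i - y i) * t + t ^ 2 with hQ
    have hnorm : ∀ t : ℝ, ‖x₀ + t • e - y‖ ^ 2 = Q t := by
      intro t
      have : x₀ + t • e - y = (x₀ - y) + t • e := by abel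
      rw [this, @norm_add_sq_real, ← hq, norm_smul, inner_smul_right, he,
        EuclideanSpace.inner_single_right]
      simp [hQ]
      ring
    have hQ0 : Q 0 = q := by simp [hQ]
    have hQd : ∀ t, HasDerivAt Q (2 * (x₀ i - y i) + 2 * t) t := by
      intro t
      have h := (((hasDerivAt_id t).const_mul (2 * (x₀ i - y i))).const_add q).add
        ((hasDerivAt_id t).pow 2)
      refine (h.congr_deriv ?_)
      simp
    have hQc : Tendsto Q (𝓝 0) (𝓝 q) := by
      have := (hQd 0).continuousAt.tendsto
      rwa [hQ0] at this
    have key := second_deriv_nonpos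
      (f := fun t => u (x₀ + t • e) - H (Q t))
      (f' := fun t => fderiv ℝ u (x₀ + t • e) e - H' (Q t) * (2 * (x₀ i - y i) + 2 * t))
      (c := fderiv ℝ (fun z => fderiv ℝ u z e) x₀ e
        - (H2 * (2 * (x₀ i - y i) + 2 * 0) * (2 * (x₀ i - y i) + 2 * 0) + H' q * 2)) ?_ ?_ ?_
    · nlinarith
    · filter_upwards [hcont (hΩo.mem_nhds hx₀), hQc hH] with t h1 h2
      refine HasDerivAt.sub ?_ ?_
      · exact (hd1 _ h1).hasFDerivAt.comp_hasDerivAt t (hline t)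
      · exact HasDerivAt.comp t h2 (hQd t)
    · refine HasDerivAt.sub ?_ ?_
      · have h : HasFDerivAt (fun z => fderiv ℝ u z e)
            (fderiv ℝ (fun z => fderiv ℝ u z e) x₀) (x₀ + (0 : ℝ) • e) := by
          rw [hl0]; exact hd2.hasFDerivAt
        exact h.comp_hasDerivAt 0 (hline 0)
      · have h : HasDerivAt H' H2 (Q 0) := by rwa [hQ0]
        have h3 : HasDerivAt (fun t : ℝ => 2 * (x₀ i - y i) + 2 * t) 2 0 := by
          simpa using ((hasDerivAt_id (0 : ℝ)).const_mul 2).const_add (2 * (x₀ i - y i))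
        have h4 := (HasDerivAt.comp (0 : ℝ) h (hQd 0)).mul h3
        refine h4.congr_deriv ?_
        simp only [Function.comp_apply, hQ0]
    · have := hcont.eventually hmax
      filter_upwards [this] with t ht
      rw [hnorm t] at ht
      simpa [hQ0, ← hq] using ht
  have hsum : q = ∑ i : Fin N, (x₀ i - y i) ^ 2 := by
    rw [hq, EuclideanSpace.norm_sq_eq]
    simp
  calc lap u x₀ ≤ ∑ i : Fin N, (4 * (x₀ i - y i) ^ 2 * H2 + 2 * H' q) :=
        Finset.sum_le_sum fun i _ => hdir i
    _ = 4 * q * H2 + 2 * N * H' q := by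
        rw [Finset.sum_add_distrib, ← Finset.sum_mul, ← Finset.mul_sum, ← hsum]
        simp
        ring

lemma lap_continuousOn {N : ℕ} {Ω : Set (Euc N)} (hΩo : IsOpen Ω) {u : Euc N → ℝ}
    (hu : ContDiffOn ℝ 2 u Ω) : ContinuousOn (lap u) Ω := by
  intro x hx
  refine ContinuousAt.continuousWithinAt ?_
  unfold lap
  refine tendsto_finsetSum _ fun i _ => ?_
  have h := ((hu.contDiffAt (hΩo.mem_nhds hx)).fderiv_right (m := 1) (by norm_num))
  have h2 := (h.clm_apply (contDiffAt_const (c := (EuclideanSpace.single i 1 : Euc N)))).fderiv_right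
    (m := 0) (by norm_num)
  exact (h2.clm_apply (contDiffAt_const (c := (EuclideanSpace.single i 1 : Euc N)))).continuousAt

/-! ### The distance function and the weight -/

lemma bdist_le_dist {N : ℕ} {Ω : Set (Euc N)} {x y : Euc N} (hy : y ∉ Ω) :
    bdist Ω x ≤ ‖x - y‖ := by
  rw [← dist_eq_norm]; exact Metric.infDist_le_dist_of_mem hy

lemma bdist_continuous {N : ℕ} (Ω : Set (Euc N)) : Continuous (bdist Ω) :=
  Metric.continuous_infDist_pt _

lemma gammaFun_eq {β s : ℝ} (h1 : 3 / 4 ≤ s) (h2 : s < 1) : gammaFun β s = β := by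
  have hs : (0 : ℝ) < s ^ 2 := by positivity
  have hpos : 0 < Real.log (s ^ 2)⁻¹ := by
    apply Real.log_pos
    rw [one_lt_inv₀ hs]; nlinarith
  have hle : Real.log (s ^ 2)⁻¹ ≤ 1 := by
    have := Real.log_le_sub_one_of_pos (inv_pos.2 hs)
    have h3 : (s ^ 2)⁻¹ ≤ 2 := by
      rw [inv_le_comm₀ hs (by norm_num)]; nlinarith
    linarith
  unfold gammaFun
  rw [min_eq_right ((one_le_inv₀ hpos).2 hle), mul_one]

lemma gammaFun_nonneg {β s : ℝ} (hβ : 0 < β) (h1 : 0 < s) (h2 : s < 1) :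
    0 ≤ gammaFun β s := by
  have hs : (0 : ℝ) < s ^ 2 := by positivity
  have hpos : 0 < Real.log (s ^ 2)⁻¹ := by
    apply Real.log_pos
    rw [one_lt_inv₀ hs]; nlinarith
  unfold gammaFun
  positivity

lemma gammaFun_of_one_lt {β s : ℝ} (h1 : 1 < s) :
    gammaFun β s = -(β / Real.log (s ^ 2)) := by
  have hpos : 0 < Real.log (s ^ 2) := Real.log_pos (by nlinarith)
  have h2 : (-Real.log (s ^ 2))⁻¹ ≤ 1 :=
    (inv_nonpos.2 (by linarith)).trans zero_le_one
  unfold gammaFun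
  rw [Real.log_inv, min_eq_left h2, inv_neg]
  ring

/-- The weight `γ` jumps at `s = 1`, from the value `β` on the left to `0` at `1`; since `Δu - e^u`
is continuous, this forces every solution to vanish where `δ = 1`. -/
lemma eq_zero_of_bdist_eq_one {N : ℕ} {Ω : Set (Euc N)} (hΩo : IsOpen Ω)
    (hc : Ωᶜ.Nonempty) {β : ℝ} (hβ : 0 < β) {u : Euc N → ℝ} (hu : IsGammaSolution β Ω u)
    {x : Euc N} (hx : x ∈ Ω) (h1 : bdist Ω x = 1) : u x = 0 := by
  obtain ⟨y, hy, hxy⟩ := hΩo.isClosed_compl.exists_infDist_eq_dist hc x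
  have hxy1 : ‖x - y‖ = 1 := by rw [← dist_eq_norm, ← hxy]; exact h1
  set p : ℝ → Euc N := fun t => x + t • (y - x) with hp
  have hpc : Tendsto p (𝓝[>] 0) (𝓝 x) := by
    have : Continuous p := by fun_prop
    have h := this.tendsto 0
    simp only [hp, zero_smul, add_zero] at h
    exact h.mono_left nhdsWithin_le_nhds
  -- On the segment from `x` to a nearest boundary point the distance decreases at unit speed.
  have hpd : ∀ t ∈ Ioo (0 : ℝ) (1 / 4), bdist Ω (p t) = 1 - t := by
    rintro t ⟨ht0, ht1⟩
    apply le_antisymm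
    · refine (bdist_le_dist hy).trans ?_
      have : p t - y = (1 - t) • (x - y) := by simp only [hp]; module
      rw [this, norm_smul, hxy1, mul_one, Real.norm_eq_abs, abs_of_pos (by linarith)]
    · have h := Metric.infDist_le_infDist_add_dist (s := Ωᶜ) (x := x) (y := p t)
      have h2 : dist x (p t) = t := by
        rw [dist_eq_norm]
        have : x - p t = t • (x - y) := by simp only [hp]; module
        rw [this, norm_smul, hxy1, mul_one, Real.norm_eq_abs, abs_of_pos ht0]
      rw [h2] at h
      have h1' : Metric.infDist x Ωᶜ = 1 := h1
      unfold bdist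
      linarith
  have hF : ContinuousAt (fun z => lap u z - Real.exp (u z)) x :=
    ((lap_continuousOn hΩo hu.1).continuousAt (hΩo.mem_nhds hx)).sub
      (hu.1.continuousOn.continuousAt (hΩo.mem_nhds hx)).rexp
  have hA : Tendsto (fun t => lap u (p t) - Real.exp (u (p t))) (𝓝[>] 0)
      (𝓝 (lap u x - Real.exp (u x))) := hF.tendsto.comp hpc
  have hB : Tendsto (fun t : ℝ => β / (1 - t) ^ 2 * u (p t)) (𝓝[>] 0)
      (𝓝 (β / (1 - 0) ^ 2 * u x)) := by
    refine Tendsto.mul ?_ ((hu.1.continuousOn.continuousAt (hΩo.mem_nhds hx)).tendsto.comp hpc)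
    have : ContinuousAt (fun t : ℝ => β / (1 - t) ^ 2) 0 := by
      apply ContinuousAt.div <;> first | fun_prop | norm_num
    exact this.tendsto.mono_left nhdsWithin_le_nhds
  have hEq : (fun t => lap u (p t) - Real.exp (u (p t))) =ᶠ[𝓝[>] 0]
      fun t : ℝ => β / (1 - t) ^ 2 * u (p t) := by
    filter_upwards [Ioo_mem_nhdsGT (show (0 : ℝ) < 1 / 4 by norm_num),
      hpc (hΩo.mem_nhds hx)] with t ht htΩ
    have h := hu.2 _ htΩ
    rw [hpd t ht, gammaFun_eq (by linarith [ht.2]) (by linarith [ht.1])] at h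
    linarith
  have hlim := tendsto_nhds_unique (hA.congr' hEq) hB
  have h := hu.2 x hx
  have hg : gammaFun β 1 = 0 := by simp [gammaFun]
  rw [h1, hg] at h
  have : β * u x = 0 := by
    have h5 : β / (1 - 0) ^ 2 * u x = β * u x := by norm_num
    rw [h5] at hlim
    linarith
  exact (mul_eq_zero.1 this).resolve_left hβ.ne'

/-! ### The region `δ ≤ 1` -/

/-- Keller–Osserman bound in the region `δ ≤ 1`, where the potential is nonnegative away from
`δ = 1`: comparison with the blow-up profile `-2 log (r² - |z - x|²)` on the ball of radius
`r = δ(x)/2`, cut off at the set `δ = 1`, on which `u` vanishes. -/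
lemma bound_outer {N : ℕ} {Ω : Set (Euc N)} (hΩo : IsOpen Ω)
    (hc : Ωᶜ.Nonempty) {β : ℝ} (hβ : 0 < β) {u : Euc N → ℝ} (hu : IsGammaSolution β Ω u)
    {x : Euc N} (hx : x ∈ Ω) (hpos : ∀ z ∈ Ω, 0 < bdist Ω z) (h1 : bdist Ω x ≤ 1) :
    Real.exp (u x) ≤ (4 * (8 + 4 * N)) / bdist Ω x ^ 2 := by
  set r := bdist Ω x / 2 with hr
  have hd := hpos x hx
  have hr0 : 0 < r := by positivity
  have hr1 : r ≤ 1 := by linarith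
  set S := Metric.closedBall x r ∩ {z | bdist Ω z ≤ 1} with hS
  have hSΩ : Metric.closedBall x r ⊆ Ω := by
    intro z hz
    by_contra hzΩ
    have h2 := bdist_le_dist (x := x) hzΩ
    rw [Metric.mem_closedBall, dist_comm, dist_eq_norm] at hz
    linarith
  have hScomp : IsCompact S :=
    (isCompact_closedBall x r).inter_right (isClosed_le (bdist_continuous Ω) continuous_const)
  have hxS : x ∈ S := ⟨Metric.mem_closedBall_self hr0.le, h1⟩
  set g : Euc N → ℝ := fun z => (r ^ 2 - ‖z - x‖ ^ 2) ^ 2 * Real.exp (u z) with hg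
  have hgc : ContinuousOn g S := by
    refine ContinuousOn.mul (by fun_prop) ?_
    exact (hu.1.continuousOn.mono (inter_subset_left.trans hSΩ)).rexp
  obtain ⟨z₀, hz₀, hmax⟩ := hScomp.exists_isMaxOn ⟨x, hxS⟩ hgc
  have hz₀Ω := hSΩ hz₀.1
  have hgx : g x = r ^ 4 * Real.exp (u x) := by simp [hg]; ring
  have hgx0 : 0 < g x := by rw [hgx]; positivity
  have hgz : g x ≤ g z₀ := hmax hxS
  have hzr : ‖z₀ - x‖ ≤ r := by
    have := hz₀.1; rwa [Metric.mem_closedBall, dist_eq_norm] at this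
  have hzlt : ‖z₀ - x‖ < r := by
    refine lt_of_le_of_ne hzr fun h => ?_
    have : g z₀ = 0 := by simp [hg, h]
    linarith
  set q := ‖z₀ - x‖ ^ 2 with hq
  have hq0 : 0 ≤ q := by positivity
  have hqr : q < r ^ 2 := by
    rw [hq]; exact pow_lt_pow_left₀ hzlt (norm_nonneg _) two_ne_zero
  have hNn : (0 : ℝ) ≤ N := Nat.cast_nonneg N
  have hbound : g z₀ ≤ (8 + 4 * N) * r ^ 2 := by
    rcases le_or_gt (u z₀) 0 with h0 | h0
    · have h3 : Real.exp (u z₀) ≤ 1 := Real.exp_le_one_iff.2 h0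
      have h4 : (r ^ 2 - q) ^ 2 ≤ r ^ 2 := by
        have : r ^ 2 ≤ 1 := by nlinarith
        nlinarith
      calc g z₀ ≤ r ^ 2 * 1 := by
            simp only [hg]; gcongr
        _ ≤ _ := by nlinarith [sq_nonneg r]
    · have hlt : bdist Ω z₀ < 1 := by
        refine lt_of_le_of_ne hz₀.2 fun h => ?_
        exact h0.ne' (eq_zero_of_bdist_eq_one hΩo hc hβ hu hz₀Ω h)
      have hlap : Real.exp (u z₀) ≤ lap u z₀ := by
        have h := hu.2 z₀ hz₀Ω
        have h5 := gammaFun_nonneg hβ (hpos z₀ hz₀Ω) hlt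
        have : 0 ≤ gammaFun β (bdist Ω z₀) / bdist Ω z₀ ^ 2 * u z₀ := by positivity
        linarith
      have hnhd : ∀ᶠ z in 𝓝 z₀, ‖z - x‖ < r ∧ bdist Ω z < 1 := by
        have c1 : Continuous fun z : Euc N => ‖z - x‖ := by fun_prop
        exact (c1.continuousAt.eventually_lt_const hzlt).and
          ((bdist_continuous Ω).continuousAt.eventually_lt_const hlt)
      have hlog : ∀ z, ‖z - x‖ < r →
          Real.log (g z) = u z - (-2 * Real.log (r ^ 2 - ‖z - x‖ ^ 2)) := by
        intro z hz
        have h6 : ‖z - x‖ ^ 2 < r ^ 2 := pow_lt_pow_left₀ hz (norm_nonneg _) two_ne_zero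
        simp only [hg]
        rw [Real.log_mul (by have : 0 < r ^ 2 - ‖z - x‖ ^ 2 := by linarith
                             positivity) (Real.exp_pos _).ne', Real.log_exp, Real.log_pow]
        push_cast; ring
      have hH : ∀ s, s < r ^ 2 →
          HasDerivAt (fun s => -2 * Real.log (r ^ 2 - s)) (2 / (r ^ 2 - s)) s := by
        intro s hs
        have h7 := (((hasDerivAt_id s).const_sub (r ^ 2)).log
          (by simp; linarith)).const_mul (-2)
        refine h7.congr_deriv ?_
        simp; ring
      have hH2 : HasDerivAt (fun s => 2 / (r ^ 2 - s)) (2 / (r ^ 2 - q) ^ 2) q := by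
        have h8 := (hasDerivAt_const q (2 : ℝ)).div ((hasDerivAt_id q).const_sub (r ^ 2))
          (by simp; linarith)
        refine h8.congr_deriv ?_
        simp
      have key := lap_le_radial hΩo hu.1 (y := x) hz₀Ω hq
        ((eventually_lt_nhds hqr).mono fun s hs => hH s hs) hH2 (by
          filter_upwards [hnhd] with z hz
          rw [← hlog z hz.1, ← hlog z₀ hzlt]
          have h9 : ‖z - x‖ ^ 2 < r ^ 2 := pow_lt_pow_left₀ hz.1 (norm_nonneg _) two_ne_zero
          have h10 : 0 < r ^ 2 - ‖z - x‖ ^ 2 := by linarith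
          refine Real.log_le_log (by simp only [hg]; positivity) (hmax ⟨?_, hz.2.le⟩)
          rw [Metric.mem_closedBall, dist_eq_norm]; exact hz.1.le)
      have hD : 0 < r ^ 2 - q := by linarith
      have h11 : g z₀ ≤ (r ^ 2 - q) ^ 2 *
          (4 * q * (2 / (r ^ 2 - q) ^ 2) + 2 * N * (2 / (r ^ 2 - q))) := by
        simp only [hg]
        gcongr
        linarith
      have h12 : (r ^ 2 - q) ^ 2 *
          (4 * q * (2 / (r ^ 2 - q) ^ 2) + 2 * N * (2 / (r ^ 2 - q)))
          = 8 * q + 4 * N * (r ^ 2 - q) := by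
        field_simp; ring
      rw [h12] at h11
      nlinarith
  have hfin : Real.exp (u x) * r ^ 2 ≤ 8 + 4 * N := by
    have h13 : (Real.exp (u x) * r ^ 2) * r ^ 2 ≤ (8 + 4 * N) * r ^ 2 := by
      calc _ = g x := by rw [hgx]; ring
        _ ≤ _ := hgz.trans hbound
    exact le_of_mul_le_mul_right h13 (by positivity)
  rw [le_div_iff₀ (by positivity)]
  have : bdist Ω x ^ 2 = 4 * r ^ 2 := by rw [hr]; ring
  rw [this]; linarith

/-! ### The region `δ ≥ 1` -/

/-- At a point with `s = δ² > 1`, `t² = log s` and `v = u`, the equation reads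
`Δu = e^v - β v / (s t²)`, which is incompatible with `Δu ≤ -κ / (s t³)` for this `κ`: after
multiplication by `s t³` this is the positivity of `w³ / 6 - β w + κ` for `w = v t > 0`. -/
lemma no_touch {β κ s t v : ℝ} (hβ : 0 < β) (hκ : κ = β * (6 * β + 1) + 1) (hs : 1 ≤ s)
    (ht : 0 < t) (h : Real.exp v - β / (s * t ^ 2) * v ≤ -(κ / (s * t ^ 3))) : False := by
  have hκ0 : 0 < κ := by rw [hκ]; positivity
  have hs0 : 0 < s := by linarith
  have hev := Real.exp_pos v
  have hk : 0 < κ / (s * t ^ 3) := by positivity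
  rcases le_or_gt v 0 with hv | hv
  · have : β / (s * t ^ 2) * v ≤ 0 := mul_nonpos_of_nonneg_of_nonpos (by positivity) hv
    linarith
  · have hcube : v ^ 3 / 6 ≤ Real.exp v := by
      have := Real.pow_div_factorial_le_exp v hv.le 3
      simpa [Nat.factorial] using this
    have h2 : v ^ 3 / 6 - β / (s * t ^ 2) * v + κ / (s * t ^ 3) ≤ 0 := by linarith
    have h3 : s * (v * t) ^ 3 / 6 - β * (v * t) + κ ≤ 0 := by
      have h4 : s * (v * t) ^ 3 / 6 - β * (v * t) + κ
          = (s * t ^ 3) * (v ^ 3 / 6 - β / (s * t ^ 2) * v + κ / (s * t ^ 3)) := by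
        field_simp
      rw [h4]
      exact mul_nonpos_of_nonneg_of_nonpos (by positivity) h2
    set w := v * t with hw
    have hw0 : 0 < w := by positivity
    have h5 : w ^ 3 / 6 - β * w + κ ≤ 0 := by
      have : w ^ 3 ≤ s * w ^ 3 := le_mul_of_one_le_left (by positivity) hs
      linarith
    rcases le_or_gt (6 * β) (w ^ 2) with h6 | h6
    · nlinarith
    · have h7 : w ≤ 6 * β + 1 := by nlinarith
      nlinarith

/-- The concave barrier used in `{δ ≥ 1}`, as a function of `s = δ²`. -/
def barrier (K a s : ℝ) : ℝ := K * (1 - Real.exp (-(a * √(Real.log s))))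

lemma barrier_deriv {K a s : ℝ} (hs : 1 < s) :
    HasDerivAt (barrier K a)
      (K * a * Real.exp (-(a * √(Real.log s))) / (2 * (√(Real.log s) * s))) s := by
  have hl : 0 < Real.log s := Real.log_pos hs
  have ht : 0 < √(Real.log s) := Real.sqrt_pos.2 hl
  have h := (((((Real.hasDerivAt_log (by linarith : s ≠ 0)).sqrt hl.ne').const_mul a).neg.exp).const_sub
    1).const_mul K
  refine h.congr_deriv ?_
  have : s ≠ 0 := by linarith
  simp
  field_simp

lemma barrier_deriv2 {K a s t : ℝ} (hs : 1 < s) (htdef : t = √(Real.log s)) :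
    HasDerivAt
      (fun s => K * a * Real.exp (-(a * √(Real.log s))) / (2 * (√(Real.log s) * s)))
      (K * a * Real.exp (-(a * t)) / (2 * s ^ 2) * (-(a / (2 * t ^ 2)) - 1 / (2 * t ^ 3) - 1 / t))
      s := by
  have hl : 0 < Real.log s := Real.log_pos hs
  have ht : 0 < √(Real.log s) := Real.sqrt_pos.2 hl
  have hs0 : s ≠ 0 := by linarith
  have hr := (Real.hasDerivAt_log hs0).sqrt hl.ne'
  have h := ((hr.const_mul a).neg.exp.const_mul (K * a)).div
    ((hr.mul (hasDerivAt_id s)).const_mul 2) (by simp; exact ⟨ht.ne', hs0⟩)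
  rw [htdef]
  refine h.congr_deriv ?_
  simp
  field_simp
  ring

lemma barrier_mono {K a s s' : ℝ} (hK : 0 ≤ K) (ha : 0 ≤ a) (hs : 0 < s) (h : s ≤ s') :
    barrier K a s ≤ barrier K a s' := by
  unfold barrier
  gcongr

/-- Bound in the region `δ ≥ 1`, where the potential is negative and blows up at `δ = 1`. The
function `u - barrier (δ²)` cannot have an interior maximum, because `δ ≤ ‖· - y‖` with equality at
the point considered when `y` is a nearest boundary point. -/
lemma bound_inner {N : ℕ} {Ω : Set (Euc N)} (hΩo : IsOpen Ω) (hΩb : Bornology.IsBounded Ω)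
    (hc : Ωᶜ.Nonempty) {β : ℝ} (hβ : 0 < β) {T a K : ℝ}
    (hT : ∀ z ∈ Ω, √(Real.log (bdist Ω z ^ 2)) ≤ T) (ha : 0 < a) (haT : N * T ≤ a) (hK : 0 < K)
    (hKa : K * a * Real.exp (-(a * T)) = β * (6 * β + 1) + 1)
    {u : Euc N → ℝ} (hu : IsGammaSolution β Ω u)
    {x : Euc N} (hx1 : 1 ≤ bdist Ω x) : u x ≤ K := by
  set S := {z | 1 ≤ bdist Ω z} with hS
  have hSΩ : S ⊆ Ω := by
    intro z hz
    by_contra hzΩ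
    have h0 : bdist Ω z = 0 := Metric.infDist_zero_of_mem hzΩ
    have h1 : 1 ≤ bdist Ω z := hz
    linarith
  have hScomp : IsCompact S :=
    Metric.isCompact_of_isClosed_isBounded (isClosed_le continuous_const (bdist_continuous Ω))
      (hΩb.subset hSΩ)
  have hBc : ContinuousOn (fun z => barrier K a (bdist Ω z ^ 2)) S := by
    unfold barrier
    have hl : ContinuousOn (fun z => Real.log (bdist Ω z ^ 2)) S := by
      refine ContinuousOn.log ((bdist_continuous Ω).pow 2).continuousOn fun z hz => ?_
      have h1 : 1 ≤ bdist Ω z := hz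
      positivity
    fun_prop
  obtain ⟨z₀, hz₀, hmax⟩ := hScomp.exists_isMaxOn ⟨x, hx1⟩
    ((hu.1.continuousOn.mono hSΩ).sub hBc)
  have hz₀Ω := hSΩ hz₀
  have hfinal : u z₀ - barrier K a (bdist Ω z₀ ^ 2) ≤ 0 := by
    rcases eq_or_lt_of_le (show 1 ≤ bdist Ω z₀ from hz₀) with h | h
    · rw [eq_zero_of_bdist_eq_one hΩo hc hβ hu hz₀Ω h.symm, ← h]
      simp [barrier]
    · exfalso
      obtain ⟨y, hy, hxy⟩ := hΩo.isClosed_compl.exists_infDist_eq_dist hc z₀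
      have hdy : bdist Ω z₀ = ‖z₀ - y‖ := by rw [← dist_eq_norm]; exact hxy
      set s := ‖z₀ - y‖ ^ 2 with hs
      have hs1 : 1 < s := by rw [hs, ← hdy]; nlinarith
      set t := √(Real.log s) with ht
      have hl : 0 < Real.log s := Real.log_pos hs1
      have ht0 : 0 < t := Real.sqrt_pos.2 hl
      have ht2 : t ^ 2 = Real.log s := Real.sq_sqrt hl.le
      have htT : t ≤ T := by
        have := hT z₀ hz₀Ω; rwa [hdy] at this
      have key := lap_le_radial hΩo hu.1 (y := y) hz₀Ω hs
        ((eventually_gt_nhds hs1).mono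
          fun s' h' => barrier_deriv (K := K) (a := a) h')
        (barrier_deriv2 hs1 ht) (by
          have hnh : ∀ᶠ z in 𝓝 z₀, 1 < bdist Ω z :=
            (isOpen_lt continuous_const (bdist_continuous Ω)).mem_nhds h
          filter_upwards [hnh] with z hz
          have h1 : u z - barrier K a (bdist Ω z ^ 2) ≤ u z₀ - barrier K a (bdist Ω z₀ ^ 2) :=
            hmax (show z ∈ S from hz.le)
          have h2 : barrier K a (bdist Ω z ^ 2) ≤ barrier K a (‖z - y‖ ^ 2) := by
            refine barrier_mono hK.le ha.le (by positivity) ?_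
            have := bdist_le_dist (x := z) hy
            gcongr
          rw [hdy] at h1
          linarith)
      rw [← ht] at key
      have hs0 : 0 < s := by linarith
      set E := K * a * Real.exp (-(a * t)) with hE
      have hE0 : 0 < E := by positivity
      have hEk : β * (6 * β + 1) + 1 ≤ E := by
        rw [← hKa, hE]; gcongr
      have hkey2 : 4 * s * (E / (2 * s ^ 2) * (-(a / (2 * t ^ 2)) - 1 / (2 * t ^ 3) - 1 / t))
          + 2 * N * (E / (2 * (t * s))) ≤ -(E / (s * t ^ 3)) := by
        have h1 : 4 * s * (E / (2 * s ^ 2) * (-(a / (2 * t ^ 2)) - 1 / (2 * t ^ 3) - 1 / t))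
          + 2 * N * (E / (2 * (t * s)))
          = -(E / (s * t ^ 3)) - E / (s * t ^ 2) * (a - N * t + 2 * t) := by
          field_simp; ring
        have h2 : N * t ≤ a := (mul_le_mul_of_nonneg_left htT (Nat.cast_nonneg N)).trans haT
        have h3 : 0 ≤ E / (s * t ^ 2) * (a - N * t + 2 * t) :=
          mul_nonneg (by positivity) (by linarith)
        linarith
      have hkey3 : -(E / (s * t ^ 3)) ≤ -((β * (6 * β + 1) + 1) / (s * t ^ 3)) := by
        gcongr
      have heq := hu.2 z₀ hz₀Ω
      rw [gammaFun_of_one_lt h, hdy, ← hs, ← ht2] at heq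
      have h4 : -(β / t ^ 2) / s * u z₀ = -(β / (s * t ^ 2) * u z₀) := by
        field_simp
      rw [h4] at heq
      exact no_touch hβ rfl hs1.le ht0 (v := u z₀) (by linarith)
  have hx' : u x - barrier K a (bdist Ω x ^ 2) ≤ u z₀ - barrier K a (bdist Ω z₀ ^ 2) := hmax hx1
  have hbK : barrier K a (bdist Ω x ^ 2) ≤ K := by
    unfold barrier
    nlinarith [Real.exp_pos (-(a * √(Real.log (bdist Ω x ^ 2))))]
  linarith

/-! ### The bound on all of `Ω` -/

theorem keller_osserman_bound_gamma {N : ℕ} (hN : 2 ≤ N)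
    (Ω : Set (Euc N)) (hΩo : IsOpen Ω) (hΩne : Ω.Nonempty)
    (hΩb : Bornology.IsBounded Ω) (hΩreg : BoundaryC3 Ω)
    {β : ℝ} (hβ : 0 < β) :
    ∃ A > 0, ∀ u : Euc N → ℝ, IsGammaSolution β Ω u →
      ∀ x ∈ Ω, u x ≤ Real.log (A / (bdist Ω x) ^ 2) := by
  have : Nonempty (Fin N) := ⟨⟨0, by omega⟩⟩
  have hc : Ωᶜ.Nonempty := by
    rw [Set.nonempty_compl]
    rintro rfl
    exact NormedSpace.unbounded_univ ℝ (Euc N) hΩb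
  have hpos : ∀ z ∈ Ω, 0 < bdist Ω z := fun z hz =>
    (hΩo.isClosed_compl.notMem_iff_infDist_pos hc).1 (by simpa using hz)
  obtain ⟨w, hw⟩ := hc
  obtain ⟨R₀, hR₀⟩ := hΩb.subset_closedBall w
  set R := max R₀ 1 with hR
  have hR1 : 1 ≤ R := le_max_right _ _
  have hdR : ∀ z ∈ Ω, bdist Ω z ≤ R := fun z hz => by
    have h1 := hR₀ hz
    rw [Metric.mem_closedBall, dist_eq_norm] at h1
    exact (bdist_le_dist hw).trans (h1.trans (le_max_left _ _))
  set T := √(Real.log (R ^ 2)) with hT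
  set a := N * T + 1 with ha
  have ha0 : 0 < a := by positivity
  set K := (β * (6 * β + 1) + 1) / (a * Real.exp (-(a * T))) with hK
  have hK0 : 0 < K := by positivity
  refine ⟨4 * (8 + 4 * N) + Real.exp K * R ^ 2, by positivity, fun u hu x hx => ?_⟩
  have hd := hpos x hx
  rw [Real.le_log_iff_exp_le (by positivity)]
  rcases le_or_gt (bdist Ω x) 1 with h1 | h1
  · refine (bound_outer hΩo ⟨w, hw⟩ hβ hu hx hpos h1).trans ?_
    gcongr
    have : 0 < Real.exp K * R ^ 2 := by positivity
    linarith
  · have hb : u x ≤ K := by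
      refine bound_inner (T := T) (a := a) hΩo hΩb ⟨w, hw⟩ hβ ?_ ha0 (by linarith) hK0 ?_ hu h1.le
      · intro z hz
        have := hpos z hz
        rw [hT]
        have := hdR z hz
        gcongr
      · rw [hK]; field_simp
    rw [le_div_iff₀ (by positivity)]
    have h2 : Real.exp (u x) * bdist Ω x ^ 2 ≤ Real.exp K * R ^ 2 := by
      have := hdR x hx
      gcongr
    have : (0 : ℝ) ≤ N := Nat.cast_nonneg N
    linarith
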